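/- arXiv:2601.18590 — 2 statements merged into one kernel-verified Lean document; each statement's English description precedes it below -/
import Mathlib

section
/- Let q be a prime power and let δ ∈ (0, 1 − 1/q²) be a constant. Then there exist constants c > 0 and c' > 0 such that for all sufficiently large n the following holds with d − 1 = ⌊δn⌋ and ℓ = ⌊√n⌋: the number of ℓ-tuples (u_1, …, u_ℓ) ∈ B_q^S(2n, d−1)^ℓ for which the two-sided estimate ((1 − q^{−cn})/q^ℓ) · Vol_q^S(2n, d−1) ≤ |B_q^S(2n, d−1) ∩ {v : ⟨u_1,v⟩_S = 0} ∩ ⋯ ∩ {v : ⟨u_ℓ,v⟩_S = 0}| ≤ ((1 + q^{−cn})/q^ℓ) · Vol_q^S(2n, d−1) fails is at most q^{−c'n} · Vol_q^S(2n, d−1)^ℓ. -/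
open Finset
open scoped Classical

/-- Symplectic weight of a vector in `F^{2n}`, written as `Fin n → F × F`. -/
noncomputable def sympWt {F : Type} [Zero F] [DecidableEq F] {n : ℕ} (u : Fin n → F × F) : ℕ :=
  hammingNorm u

/-- The symplectic inner product on `F^{2n}`: `⟨(a|b),(a'|b')⟩_S = ⟨a,b'⟩ - ⟨b,a'⟩`. -/
def sympInner {F : Type} [Field F] {n : ℕ} (u v : Fin n → F × F) : F :=
  ∑ i, ((u i).1 * (v i).2 - (u i).2 * (v i).1)

/-- The symplectic ball `B_q^S(2n, r)` of radius `r`. -/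
noncomputable def sympBall (F : Type) [Fintype F] [Zero F] [DecidableEq F] (n r : ℕ) :
    Finset (Fin n → F × F) :=
  Finset.univ.filter fun x => sympWt x ≤ r

/-- `Vol_q^S(2n, r) = ∑_{i=0}^{r} C(n,i)(q²-1)^i`, the volume of the symplectic ball. -/
def volS (q n r : ℕ) : ℕ :=
  ∑ i ∈ Finset.range (r + 1), n.choose i * (q ^ 2 - 1) ^ i

/-! Fix a nontrivial additive character of `F`. By orthogonality, `q ^ ℓ` times the number of
`v ∈ B` orthogonal to all `u i` is the sum of the symplectic Fourier transform of the ball `B` over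
all combinations `∑ i, y i • u i`. The combination `y = 0` contributes the main term `#B`, so by
Markov's inequality it is enough that every other term is exponentially small on average over the
tuples `u ∈ B ^ ℓ`. Averaging over a single `u j` with `y j ≠ 0` already suffices.

The Fourier transform of `B` is bounded by Rankin's trick: a vector of weight `w ≤ r` is charged
`t ^ w / t ^ r ≥ 1`, which turns the ball into a product measure. The tilt `t ∈ (0, 1]` is chosen
to bring the most likely weight down to `r` if it exceeds `r`, so that only a factor `n + 1` is
lost. Each nonzero coordinate of the frequency then gains a fixed factor `ρ < 1`. The same trick
bounds the average of `ρ ^ hammingDist b c` over `b ∈ B`, uniformly in the centre `c`. -/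

section BinomialWeights

theorem choose_mul_pow_succ (n k : ℕ) (x : ℝ) :
    (k + 1) * (n.choose (k + 1) * x ^ (k + 1)) = x * (n - k) * (n.choose k * x ^ k) := by
  have hchoose : (n.choose (k + 1) : ℝ) * (k + 1) = n.choose k * (n - k) := by
    rcases le_or_gt k n with hk | hk
    · have := Nat.choose_succ_right_eq n k
      rw [← Nat.cast_sub hk]
      exact_mod_cast this
    · simp [Nat.choose_eq_zero_of_lt hk, Nat.choose_eq_zero_of_lt (hk.trans k.lt_succ_self)]
  linear_combination x ^ (k + 1) * hchoose

theorem antitoneOn_choose_mul_pow {n r : ℕ} {x : ℝ} (hx : 0 ≤ x) (h : x * (n - r) ≤ r + 1) :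
    AntitoneOn (fun k : ℕ ↦ (n.choose k : ℝ) * x ^ k) (Set.Ici r) := by
  refine antitoneOn_of_add_one_le Set.ordConnected_Ici fun k _ hk _ ↦ ?_
  have hrk : (r : ℝ) ≤ k := mod_cast hk
  have hratio : x * (n - k) ≤ k + 1 := by nlinarith
  refine le_of_mul_le_mul_left ?_ (k.cast_add_one_pos (α := ℝ))
  rw [choose_mul_pow_succ]
  gcongr

theorem monotoneOn_choose_mul_pow {n r : ℕ} {x : ℝ} (hx : 0 ≤ x) (h : r ≤ x * (n - r + 1)) :
    MonotoneOn (fun k : ℕ ↦ (n.choose k : ℝ) * x ^ k) (Set.Iic r) := by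
  refine monotoneOn_of_le_add_one Set.ordConnected_Iic fun k _ _ hk ↦ ?_
  have hkr : (k : ℝ) + 1 ≤ r := mod_cast Set.mem_Iic.1 hk
  have hratio : k + 1 ≤ x * (n - k) := by nlinarith
  refine le_of_mul_le_mul_left ?_ (k.cast_add_one_pos (α := ℝ))
  rw [choose_mul_pow_succ]
  gcongr

theorem one_add_pow_le_of_choose_mul_pow_le {n : ℕ} {x M : ℝ}
    (h : ∀ k, n.choose k * x ^ k ≤ M) : (1 + x) ^ n ≤ (n + 1) * M := by
  rw [add_comm, add_pow]
  calc ∑ k ∈ range (n + 1), x ^ k * 1 ^ (n - k) * n.choose k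
      ≤ ∑ _k ∈ range (n + 1), M :=
        sum_le_sum fun k _ ↦ by simpa only [one_pow, mul_one, mul_comm] using h k
    _ = (n + 1) * M := by simp

theorem choose_mul_pow_le_sum {P : ℝ} (hP : 0 ≤ P) (n : ℕ) {k r : ℕ} (hk : k ≤ r) :
    n.choose k * P ^ k ≤ ∑ i ∈ range (r + 1), n.choose i * P ^ i :=
  single_le_sum (f := fun i ↦ (n.choose i : ℝ) * P ^ i) (fun i _ ↦ by positivity)
    (mem_range_succ_iff.2 hk)

/- The tilt `t` moves the mode of the weights `n.choose k * (P * t) ^ k` to `k = r`; when the mode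
of the untilted weights is already at most `r`, no tilt is needed. -/
theorem exists_tilt {P : ℝ} (hP : 0 < P) (n : ℕ) {r : ℕ} (hr : 0 < r) :
    ∃ t : ℝ, 0 < t ∧ t ≤ 1 ∧ min 1 (r / (P * n)) ≤ t ∧
      (1 + P * t) ^ n ≤ (n + 1) * (t ^ r * ∑ i ∈ range (r + 1), n.choose i * P ^ i) := by
  have hr' : (0 : ℝ) < r := mod_cast hr
  rcases le_or_gt (P * (n - r)) r with hmode | hmode
  · refine ⟨1, one_pos, le_rfl, min_le_left _ _, one_add_pow_le_of_choose_mul_pow_le fun k ↦ ?_⟩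
    rw [mul_one, one_pow, one_mul]
    rcases le_total k r with hk | hk
    · exact choose_mul_pow_le_sum hP.le n hk
    · exact (antitoneOn_choose_mul_pow hP.le (by linarith) Set.self_mem_Ici hk hk).trans
        (choose_mul_pow_le_sum hP.le n le_rfl)
  · have hnr : (0 : ℝ) < n - r := pos_of_mul_pos_right (hr'.trans hmode) hP.le
    have hPnr : 0 < P * (n - r) := mul_pos hP hnr
    set t : ℝ := r / (P * (n - r)) with ht
    have ht0 : 0 < t := by positivity
    have hmean : P * t * (n - r) = r := by rw [ht]; field_simp
    refine ⟨t, ht0, (div_le_one hPnr).2 hmode.le, (min_le_right _ _).trans ?_,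
      one_add_pow_le_of_choose_mul_pow_le fun k ↦ ?_⟩
    · rw [ht]
      gcongr
      linarith
    · have hPt : 0 ≤ P * t := by positivity
      calc (n.choose k : ℝ) * (P * t) ^ k
          ≤ n.choose r * (P * t) ^ r := by
            rcases le_total k r with hk | hk
            · exact monotoneOn_choose_mul_pow hPt (by linarith) hk Set.self_mem_Iic hk
            · exact antitoneOn_choose_mul_pow hPt (by linarith) Set.self_mem_Ici hk hk
        _ = t ^ r * (n.choose r * P ^ r) := by ring
        _ ≤ t ^ r * ∑ i ∈ range (r + 1), n.choose i * P ^ i := by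
            gcongr
            exact choose_mul_pow_le_sum hP.le n le_rfl

end BinomialWeights

section HammingBalls

variable {ι α : Type*} [Fintype ι] [DecidableEq ι] [Fintype α] [DecidableEq α]

theorem sum_prod_of_support_eq [Zero α] {R : Type*} [CommSemiring R] {f : ι → α → R}
    (hf : ∀ i, f i 0 = 1) (S : Finset ι) :
    ∑ v : ι → α with ({i | v i ≠ 0} : Finset ι) = S, ∏ i, f i (v i) =
      ∏ i ∈ S, ∑ a ∈ univ.erase 0, f i a := by
  have hfiber : ({v : ι → α | ({i | v i ≠ 0} : Finset ι) = S} : Finset _) =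
      Fintype.piFinset fun i ↦ if i ∈ S then univ.erase 0 else {0} := by
    ext v
    simp only [mem_filter_univ, Fintype.mem_piFinset, Finset.ext_iff]
    refine forall_congr' fun i ↦ ?_
    by_cases hi : i ∈ S <;> simp [hi]
  rw [hfiber, ← prod_univ_sum, ← prod_subset (subset_univ S)]
  · exact prod_congr rfl fun i hi ↦ by rw [if_pos hi]
  · intro i _ hi
    rw [if_neg hi, sum_singleton, hf]

theorem sum_hammingNorm_le_prod [Zero α] {R : Type*} [CommSemiring R] {f : ι → α → R}
    (hf : ∀ i, f i 0 = 1) (r : ℕ) :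
    ∑ v : ι → α with hammingNorm v ≤ r, ∏ i, f i (v i) =
      ∑ S : Finset ι with #S ≤ r, ∏ i ∈ S, ∑ a ∈ univ.erase 0, f i a := by
  rw [← sum_fiberwise_of_maps_to (g := fun v : ι → α ↦ ({i | v i ≠ 0} : Finset ι))
    (t := ({S | #S ≤ r} : Finset (Finset ι))) fun v hv ↦ by
      simpa only [mem_filter_univ, hammingNorm] using hv]
  refine sum_congr rfl fun S hS ↦ ?_
  rw [← sum_prod_of_support_eq hf S, filter_filter]
  refine sum_congr (filter_congr fun v _ ↦ and_iff_right_of_imp ?_) fun _ _ ↦ rfl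
  rintro rfl
  exact (mem_filter.1 hS).2

/- Rankin's trick: a support of size at most `r` has weight at least `t ^ r`. -/
theorem pow_mul_norm_sum_hammingNorm_le_prod_le [Zero α] {𝕜 : Type*} [NormedField 𝕜]
    {f : ι → α → 𝕜} (hf : ∀ i, f i 0 = 1) (r : ℕ) {t : ℝ} (ht0 : 0 ≤ t) (ht1 : t ≤ 1) :
    t ^ r * ‖∑ v : ι → α with hammingNorm v ≤ r, ∏ i, f i (v i)‖ ≤
      ∏ i, (1 + t * ‖∑ a ∈ univ.erase 0, f i a‖) := by
  rw [sum_hammingNorm_le_prod hf, prod_one_add, powerset_univ]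
  calc t ^ r * ‖∑ S : Finset ι with #S ≤ r, ∏ i ∈ S, ∑ a ∈ univ.erase 0, f i a‖
      ≤ t ^ r * ∑ S : Finset ι with #S ≤ r, ∏ i ∈ S, ‖∑ a ∈ univ.erase 0, f i a‖ := by
        gcongr
        simpa only [norm_prod] using
          norm_sum_le _ fun S : Finset ι ↦ ∏ i ∈ S, ∑ a ∈ univ.erase 0, f i a
    _ ≤ ∑ S : Finset ι with #S ≤ r, ∏ i ∈ S, t * ‖∑ a ∈ univ.erase 0, f i a‖ := by
        rw [mul_sum]
        refine sum_le_sum fun S hS ↦ ?_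
        rw [prod_mul_distrib, prod_const]
        gcongr ?_ * _
        exact pow_le_pow_of_le_one ht0 ht1 (mem_filter.1 hS).2
    _ ≤ ∑ S : Finset ι, ∏ i ∈ S, t * ‖∑ a ∈ univ.erase 0, f i a‖ :=
        sum_le_sum_of_subset_of_nonneg (filter_subset _ _) fun S _ _ ↦ by positivity

theorem sum_erase_zero_ite_eq_le [Zero α] {ρ : ℝ} (hρ : ρ ≤ 1) (c : α) :
    ∑ a ∈ univ.erase (0 : α), (if a = c then 1 else ρ) ≤ 1 + (Fintype.card α - 2) * ρ := by
  have hletter (a : α) : (if a = c then 1 else ρ) = ρ + if a = c then 1 - ρ else 0 := by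
    split_ifs <;> ring
  have hcard : ((#(univ.erase (0 : α)) : ℕ) : ℝ) = Fintype.card α - 1 := by
    rw [cast_card_erase_of_mem (mem_univ _), card_univ]
  simp only [hletter, sum_add_distrib, sum_const, nsmul_eq_mul, hcard, sum_ite_eq']
  split_ifs <;> linarith

theorem pow_mul_sum_pow_hammingDist_le [Zero α] {ρ : ℝ} (hρ0 : 0 ≤ ρ) (hρ1 : ρ ≤ 1) (c : ι → α)
    (r : ℕ) {t : ℝ} (ht0 : 0 ≤ t) (ht1 : t ≤ 1) :
    t ^ r * ∑ v : ι → α with hammingNorm v ≤ r, ρ ^ hammingDist v c ≤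
      (1 + t * (1 + (Fintype.card α - 2) * ρ)) ^ Fintype.card ι := by
  obtain ⟨f, hf_zero, hf_ne⟩ : ∃ f : ι → α → ℝ, (∀ i, f i 0 = 1) ∧
      ∀ i a, a ≠ 0 → f i a = if a = c i then 1 else ρ :=
    ⟨fun i ↦ Function.update (fun a ↦ if a = c i then 1 else ρ) 0 1,
      fun _ ↦ Function.update_self .., fun _ _ ha ↦ Function.update_of_ne ha ..⟩
  have hf_le (i : ι) (a : α) : (if a = c i then 1 else ρ) ≤ f i a := by
    rcases eq_or_ne a 0 with rfl | ha
    · rw [hf_zero]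
      split_ifs
      exacts [le_rfl, hρ1]
    · exact (hf_ne i a ha).ge
  have hletter_nonneg (i : ι) (a : α) : 0 ≤ if a = c i then 1 else ρ := by positivity
  have hpow (v : ι → α) : ρ ^ hammingDist v c ≤ ∏ i, f i (v i) := by
    calc ρ ^ hammingDist v c = ∏ i, if v i = c i then 1 else ρ := by
          rw [prod_ite, prod_const_one, one_mul, prod_const, hammingDist]
      _ ≤ ∏ i, f i (v i) := prod_le_prod (fun i _ ↦ hletter_nonneg i _) fun i _ ↦ hf_le i _
  have hletters (i : ι) :
      ‖∑ a ∈ univ.erase 0, f i a‖ ≤ 1 + (Fintype.card α - 2) * ρ := by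
    rw [sum_congr rfl fun a ha ↦ hf_ne i a (ne_of_mem_erase ha),
      Real.norm_of_nonneg (sum_nonneg fun a _ ↦ hletter_nonneg i a)]
    exact sum_erase_zero_ite_eq_le hρ1 (c i)
  calc t ^ r * ∑ v : ι → α with hammingNorm v ≤ r, ρ ^ hammingDist v c
      ≤ t ^ r * ‖∑ v : ι → α with hammingNorm v ≤ r, ∏ i, f i (v i)‖ := by
        gcongr
        exact (sum_le_sum fun v _ ↦ hpow v).trans (Real.le_norm_self _)
    _ ≤ ∏ i, (1 + t * ‖∑ a ∈ univ.erase 0, f i a‖) :=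
        pow_mul_norm_sum_hammingNorm_le_prod_le hf_zero r ht0 ht1
    _ ≤ ∏ _i : ι, (1 + t * (1 + (Fintype.card α - 2) * ρ)) :=
        prod_le_prod (fun i _ ↦ by positivity) fun i _ ↦ by gcongr; exact hletters i
    _ = (1 + t * (1 + (Fintype.card α - 2) * ρ)) ^ Fintype.card ι := by
        rw [prod_const, card_univ]

theorem card_hammingNorm_le [Zero α] (r : ℕ) :
    #({v : ι → α | hammingNorm v ≤ r}) =
      ∑ k ∈ range (r + 1), (Fintype.card ι).choose k * (Fintype.card α - 1) ^ k := by
  have h := sum_hammingNorm_le_prod (ι := ι) (f := fun _ (_ : α) ↦ (1 : ℕ)) (fun _ ↦ rfl) r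
  simp only [prod_const_one, sum_const, smul_eq_mul, mul_one, prod_const,
    card_erase_of_mem (mem_univ (0 : α)), card_univ] at h
  rw [h, ← sum_fiberwise_of_maps_to (g := card) (t := range (r + 1)) fun S hS ↦
    mem_range_succ_iff.2 (mem_filter.1 hS).2]
  refine sum_congr rfl fun k hk ↦ ?_
  have hfiber : ({S ∈ ({S | #S ≤ r} : Finset (Finset ι)) | #S = k}) = powersetCard k univ := by
    ext S
    have := mem_range_succ_iff.1 hk
    simp only [mem_filter, mem_univ, true_and, mem_powersetCard, subset_univ]
    omega
  rw [hfiber, sum_powersetCard k univ fun k ↦ (Fintype.card α - 1) ^ k, card_univ, smul_eq_mul]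

end HammingBalls

section Characters

variable {F V : Type*} [Field F] [AddCommGroup V] [Module F V] [Fintype V] {ψ : AddChar F ℂ}

theorem sum_addChar_comp_linearMap (hψ : ψ ≠ 1) (φ : V →ₗ[F] F) :
    ∑ v, ψ (φ v) = if φ = 0 then (Fintype.card V : ℂ) else 0 := by
  have htrivial : ψ.compAddMonoidHom φ.toAddMonoidHom = 0 ↔ φ = 0 := by
    refine ⟨fun h ↦ ?_, fun h ↦ by ext v; simp [h]⟩
    by_contra hφ
    obtain ⟨a, ha⟩ := AddChar.ne_one_iff.1 hψ
    obtain ⟨v, rfl⟩ := LinearMap.surjective hφ a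
    exact ha (DFunLike.congr_fun h v)
  rw [← if_congr htrivial rfl rfl, ← AddChar.sum_eq_ite]
  rfl

theorem sum_erase_zero_addChar_comp_linearMap [DecidableEq V] (hψ : ψ ≠ 1) (φ : V →ₗ[F] F) :
    ∑ v ∈ univ.erase 0, ψ (φ v) = if φ = 0 then (Fintype.card V - 1 : ℂ) else -1 := by
  rw [sum_erase_eq_sub (mem_univ 0), sum_addChar_comp_linearMap hψ, map_zero,
    AddChar.map_zero_eq_one]
  split_ifs <;> ring

theorem norm_sum_erase_zero_addChar_det [Fintype F] [DecidableEq F] (hψ : ψ ≠ 1)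
    (x : F × F) :
    ‖∑ a ∈ univ.erase (0 : F × F), ψ (x.1 * a.2 - x.2 * a.1)‖ =
      if x = 0 then (Fintype.card F : ℝ) ^ 2 - 1 else 1 := by
  let φ : F × F →ₗ[F] F := x.1 • LinearMap.snd F F F - x.2 • LinearMap.fst F F F
  have hφ : φ = 0 ↔ x = 0 := by
    refine ⟨fun h ↦ Prod.ext ?_ ?_, fun h ↦ by simp [φ, h]⟩
    · simpa [φ] using DFunLike.congr_fun h (0, 1)
    · simpa [φ] using DFunLike.congr_fun h (1, 0)
  have hcard : (1 : ℝ) ≤ (Fintype.card F : ℝ) ^ 2 :=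
    one_le_pow₀ (mod_cast Fintype.card_pos)
  calc ‖∑ a ∈ univ.erase (0 : F × F), ψ (x.1 * a.2 - x.2 * a.1)‖
      = ‖∑ a ∈ univ.erase (0 : F × F), ψ (φ a)‖ := rfl
    _ = if x = 0 then (Fintype.card F : ℝ) ^ 2 - 1 else 1 := by
      rw [sum_erase_zero_addChar_comp_linearMap hψ, Fintype.card_prod]
      simp only [hφ]
      split_ifs
      · rw [← Real.norm_of_nonneg (sub_nonneg.2 hcard), ← Complex.norm_real]
        push_cast
        rw [sq]
      · rw [norm_neg, norm_one]

end Characters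

section Damping

/-- The factor by which one nonzero coordinate of the frequency lowers the bound for the Fourier
transform of a ball: tilted by `t`, a zero coordinate contributes `1 + P * t`, where `P` is the
number of nonzero letters, and a nonzero coordinate contributes at most `1 + t`. -/
noncomputable def damping (P t : ℝ) : ℝ :=
  (1 + t) / (1 + P * t)

variable {P t : ℝ}

theorem damping_nonneg (hP : 0 ≤ P) (ht : 0 ≤ t) : 0 ≤ damping P t := by
  unfold damping
  positivity

theorem damping_le_one (hP : 1 ≤ P) (ht : 0 ≤ t) : damping P t ≤ 1 :=
  div_le_one_of_le₀ (by nlinarith) (by positivity)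

theorem mul_damping (hP : 0 ≤ P) (ht : 0 ≤ t) : (1 + P * t) * damping P t = 1 + t :=
  mul_div_cancel₀ _ (by positivity)

theorem half_le_one_sub_damping (hP : 3 ≤ P) (ht0 : 0 ≤ t) (ht1 : t ≤ 1) :
    t / 2 ≤ 1 - damping P t := by
  have hD : 0 < 1 + P * t := by positivity
  refine le_of_mul_le_mul_left ?_ hD
  rw [mul_sub, mul_damping (by linarith) ht0]
  nlinarith [mul_nonneg ht0 (sub_nonneg.2 ht1), mul_nonneg ht0 (sub_nonneg.2 hP)]

theorem one_add_mul_one_add_damping_le (hP : 3 ≤ P) (ht0 : 0 ≤ t) (ht1 : t ≤ 1) :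
    1 + t * (1 + (P - 1) * damping P t) ≤ (1 + P * t) * (1 - t ^ 2 / 4) := by
  have hP0 : 0 ≤ P := by linarith
  have hgap : (t / 2) ^ 2 ≤ (1 - damping P t) ^ 2 :=
    pow_le_pow_left₀ (by positivity) (half_le_one_sub_damping hP ht0 ht1) 2
  calc 1 + t * (1 + (P - 1) * damping P t)
      = (1 + P * t) * (1 - (1 - damping P t) ^ 2) := by
        linear_combination (damping P t - 1) * mul_damping hP0 ht0
    _ ≤ (1 + P * t) * (1 - t ^ 2 / 4) := by
        gcongr
        linarith

end Damping

section SymplecticBall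

variable {F : Type} [Field F] {n : ℕ}

theorem sympInner_sum_smul_left {ι : Type*} [Fintype ι] (y : ι → F) (u : ι → Fin n → F × F)
    (v : Fin n → F × F) :
    sympInner (∑ i, y i • u i) v = ∑ i, y i * sympInner (u i) v := by
  simp only [sympInner, Finset.sum_apply, Pi.smul_apply, Prod.fst_sum, Prod.snd_sum, Prod.smul_fst,
    Prod.smul_snd, smul_eq_mul, sum_mul, mul_sum, mul_sub, ← sum_sub_distrib]
  rw [sum_comm]
  simp only [mul_assoc]

/-- The Fourier transform at `x` of the indicator function of `B`, with respect to the symplectic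
inner product and an additive character `ψ` of the field. -/
noncomputable def sympFourier (ψ : AddChar F ℂ) (B : Finset (Fin n → F × F)) (x : Fin n → F × F) :
    ℂ :=
  ∑ v ∈ B, ψ (sympInner x v)

theorem sympFourier_zero (ψ : AddChar F ℂ) (B : Finset (Fin n → F × F)) :
    sympFourier ψ B 0 = #B := by
  simp [sympFourier, sympInner]

theorem addChar_sympInner (ψ : AddChar F ℂ) (x v : Fin n → F × F) :
    ψ (sympInner x v) = ∏ i, ψ ((x i).1 * (v i).2 - (x i).2 * (v i).1) :=
  map_prod ψ.toMonoidHom (fun _ ↦ Multiplicative.ofAdd _) univ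

variable [DecidableEq F]

theorem sympWt_add_smul (z b : Fin n → F × F) {y : F} (hy : y ≠ 0) :
    sympWt (z + y • b) = hammingDist b (-(y⁻¹ • z)) := by
  have hfactor : z + y • b = y • (-(-(y⁻¹ • z)) + b) := by
    rw [neg_neg, smul_add, smul_inv_smul₀ hy]
  rw [hammingDist_comm, hammingDist_eq_hammingNorm, sympWt, hfactor]
  exact hammingNorm_smul (fun _ ↦ IsSMulRegular.of_ne_zero hy) _

variable [Fintype F]

theorem sympBall_eq_filter (n r : ℕ) :
    sympBall F n r = ({v | hammingNorm v ≤ r} : Finset (Fin n → F × F)) :=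
  rfl

theorem card_sympBall (n r : ℕ) : #(sympBall F n r) = volS (Fintype.card F) n r := by
  rw [sympBall_eq_filter, card_hammingNorm_le, volS, Fintype.card_fin, Fintype.card_prod, sq]

theorem sympBall_nonempty (n r : ℕ) : (sympBall F n r).Nonempty :=
  ⟨0, (mem_filter_univ _).2 (hammingNorm_zero.trans_le r.zero_le)⟩

theorem three_le_card_sq_sub_one (F : Type*) [Field F] [Fintype F] :
    (3 : ℝ) ≤ (Fintype.card F : ℝ) ^ 2 - 1 := by
  have hcard : (2 : ℝ) ≤ Fintype.card F := mod_cast Fintype.one_lt_card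
  nlinarith

theorem cast_card_sympBall (n r : ℕ) :
    (#(sympBall F n r) : ℝ) =
      ∑ i ∈ range (r + 1), n.choose i * ((Fintype.card F : ℝ) ^ 2 - 1) ^ i := by
  have hcard : 1 ≤ Fintype.card F ^ 2 := Nat.one_le_pow _ _ Fintype.card_pos
  rw [card_sympBall, volS]
  push_cast [hcard]
  rfl

variable {ψ : AddChar F ℂ}

theorem pow_mul_norm_sympFourier_sympBall_le (hψ : ψ ≠ 1) (r : ℕ) (x : Fin n → F × F) {t : ℝ}
    (ht0 : 0 ≤ t) (ht1 : t ≤ 1) :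
    t ^ r * ‖sympFourier ψ (sympBall F n r) x‖ ≤
      (1 + ((Fintype.card F : ℝ) ^ 2 - 1) * t) ^ n *
        damping ((Fintype.card F : ℝ) ^ 2 - 1) t ^ sympWt x := by
  have hP := three_le_card_sq_sub_one F
  set P : ℝ := (Fintype.card F : ℝ) ^ 2 - 1
  have hfactor (i : Fin n) :
      1 + t * (if x i = 0 then P else 1) = (1 + P * t) * if x i = 0 then 1 else damping P t := by
    split_ifs
    · ring
    · rw [mul_damping (by linarith) ht0, mul_one]
  have hzero (i : Fin n) :
      ψ ((x i).1 * (0 : F × F).2 - (x i).2 * (0 : F × F).1) = 1 := by simp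
  calc t ^ r * ‖sympFourier ψ (sympBall F n r) x‖
      = t ^ r * ‖∑ v : Fin n → F × F with hammingNorm v ≤ r,
          ∏ i, ψ ((x i).1 * (v i).2 - (x i).2 * (v i).1)‖ := by
        rw [sympFourier, sum_congr rfl fun v _ ↦ addChar_sympInner ψ x v, sympBall_eq_filter]
    _ ≤ ∏ i, (1 + t * ‖∑ a ∈ univ.erase (0 : F × F), ψ ((x i).1 * a.2 - (x i).2 * a.1)‖) :=
        pow_mul_norm_sum_hammingNorm_le_prod_le
          (f := fun i (a : F × F) ↦ ψ ((x i).1 * a.2 - (x i).2 * a.1)) hzero r ht0 ht1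
    _ = ∏ i, (1 + P * t) * if x i = 0 then 1 else damping P t :=
        prod_congr rfl fun i _ ↦ by rw [norm_sum_erase_zero_addChar_det hψ, hfactor]
    _ = (1 + P * t) ^ n * damping P t ^ sympWt x := by
        rw [prod_mul_distrib, prod_const, card_univ, Fintype.card_fin, prod_ite, prod_const_one,
          one_mul, prod_const, sympWt, hammingNorm]

variable (F n) in
/-- Tilting by `t` gives a vector of weight `w` the mass `t ^ w`, for a total mass of
`(1 + (q ^ 2 - 1) * t) ^ n`. The tilt is adapted to the radius `r` if, up to a factor `n + 1`, this
total is at most what one gets by giving mass `t ^ r` to every vector of the ball of radius `r`. -/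
def IsTilt (r : ℕ) (t : ℝ) : Prop :=
  0 < t ∧ t ≤ 1 ∧
    (1 + ((Fintype.card F : ℝ) ^ 2 - 1) * t) ^ n ≤ (n + 1) * (t ^ r * #(sympBall F n r))

theorem norm_sympFourier_sympBall_le (hψ : ψ ≠ 1) {r : ℕ} {t : ℝ} (ht : IsTilt F n r t)
    (x : Fin n → F × F) :
    ‖sympFourier ψ (sympBall F n r) x‖ ≤
      (n + 1) * #(sympBall F n r) * damping ((Fintype.card F : ℝ) ^ 2 - 1) t ^ sympWt x := by
  obtain ⟨ht0, ht1, htilt⟩ := ht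
  have hP := three_le_card_sq_sub_one F
  have hdamping := damping_nonneg (P := (Fintype.card F : ℝ) ^ 2 - 1) (by linarith) ht0.le
  refine le_of_mul_le_mul_left ?_ (pow_pos ht0 r)
  calc t ^ r * ‖sympFourier ψ (sympBall F n r) x‖
      ≤ (1 + ((Fintype.card F : ℝ) ^ 2 - 1) * t) ^ n *
          damping ((Fintype.card F : ℝ) ^ 2 - 1) t ^ sympWt x :=
        pow_mul_norm_sympFourier_sympBall_le hψ r x ht0.le ht1
    _ ≤ (n + 1) * (t ^ r * #(sympBall F n r)) *
          damping ((Fintype.card F : ℝ) ^ 2 - 1) t ^ sympWt x := by gcongr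
    _ = t ^ r * ((n + 1) * #(sympBall F n r) *
          damping ((Fintype.card F : ℝ) ^ 2 - 1) t ^ sympWt x) := by ring

theorem sum_damping_pow_hammingDist_le {r : ℕ} {t : ℝ} (ht : IsTilt F n r t)
    (c : Fin n → F × F) :
    ∑ b ∈ sympBall F n r, damping ((Fintype.card F : ℝ) ^ 2 - 1) t ^ hammingDist b c ≤
      (n + 1) * #(sympBall F n r) * (1 - t ^ 2 / 4) ^ n := by
  obtain ⟨ht0, ht1, htilt⟩ := ht
  have hP := three_le_card_sq_sub_one F
  set P : ℝ := (Fintype.card F : ℝ) ^ 2 - 1 with hPdef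
  have hcard : (Fintype.card (F × F) : ℝ) - 2 = P - 1 := by
    rw [hPdef, Fintype.card_prod, Nat.cast_mul]
    ring
  have hP1 : 1 ≤ P := by linarith
  have hdamping : 0 ≤ damping P t := damping_nonneg (by linarith) ht0.le
  refine le_of_mul_le_mul_left ?_ (pow_pos ht0 r)
  calc t ^ r * ∑ b ∈ sympBall F n r, damping P t ^ hammingDist b c
      ≤ (1 + t * (1 + (P - 1) * damping P t)) ^ n := by
        have := pow_mul_sum_pow_hammingDist_le hdamping
          (damping_le_one hP1 ht0.le) c r ht0.le ht1
        rwa [hcard, Fintype.card_fin] at this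
    _ ≤ ((1 + P * t) * (1 - t ^ 2 / 4)) ^ n := by
        have := one_add_mul_one_add_damping_le hP ht0.le ht1
        have := mul_nonneg (sub_nonneg.2 hP1) hdamping
        gcongr
    _ ≤ (n + 1) * (t ^ r * #(sympBall F n r)) * (1 - t ^ 2 / 4) ^ n := by
        rw [mul_pow]
        gcongr
        exact pow_nonneg (by nlinarith) n
    _ = t ^ r * ((n + 1) * #(sympBall F n r) * (1 - t ^ 2 / 4) ^ n) := by ring

theorem exists_isTilt (n : ℕ) {r : ℕ} (hr : 0 < r) :
    ∃ t, IsTilt F n r t ∧ min 1 (r / (((Fintype.card F : ℝ) ^ 2 - 1) * n)) ≤ t := by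
  have hP : 0 < (Fintype.card F : ℝ) ^ 2 - 1 := by linarith [three_le_card_sq_sub_one F]
  obtain ⟨t, ht0, ht1, hmin, htilt⟩ := exists_tilt hP n hr
  rw [← cast_card_sympBall] at htilt
  exact ⟨t, ⟨ht0, ht1, htilt⟩, hmin⟩

theorem sum_norm_sympFourier_add_smul_le (hψ : ψ ≠ 1) {r : ℕ} {t : ℝ} (ht : IsTilt F n r t)
    (z : Fin n → F × F) {y : F} (hy : y ≠ 0) :
    ∑ b ∈ sympBall F n r, ‖sympFourier ψ (sympBall F n r) (z + y • b)‖ ≤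
      #(sympBall F n r) * ((n + 1) ^ 2 * #(sympBall F n r) * (1 - t ^ 2 / 4) ^ n) := by
  set P : ℝ := (Fintype.card F : ℝ) ^ 2 - 1
  calc ∑ b ∈ sympBall F n r, ‖sympFourier ψ (sympBall F n r) (z + y • b)‖
      ≤ ∑ b ∈ sympBall F n r,
          (n + 1) * #(sympBall F n r) * damping P t ^ hammingDist b (-(y⁻¹ • z)) :=
        sum_le_sum fun b _ ↦ sympWt_add_smul z b hy ▸ norm_sympFourier_sympBall_le hψ ht _
    _ = (n + 1) * #(sympBall F n r) *
          ∑ b ∈ sympBall F n r, damping P t ^ hammingDist b (-(y⁻¹ • z)) := (mul_sum ..).symm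
    _ ≤ (n + 1) * #(sympBall F n r) *
          ((n + 1) * #(sympBall F n r) * (1 - t ^ 2 / 4) ^ n) := by
        gcongr
        exact sum_damping_pow_hammingDist_le ht _
    _ = #(sympBall F n r) * ((n + 1) ^ 2 * #(sympBall F n r) * (1 - t ^ 2 / 4) ^ n) := by ring

end SymplecticBall

section Averaging

variable {ι α : Type*} [Fintype ι] [DecidableEq ι]

theorem sum_piFinset_update (B : Finset α) (j : ι) (f : (ι → α) → ℝ) :
    ∑ u ∈ Fintype.piFinset fun _ ↦ B, ∑ b ∈ B, f (Function.update u j b) =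
      ∑ u ∈ Fintype.piFinset fun _ ↦ B, #B * f u := by
  have hmem {p : (ι → α) × α} (hp : p ∈ (Fintype.piFinset fun _ ↦ B) ×ˢ B) :
      (Function.update p.1 j p.2, p.1 j) ∈ (Fintype.piFinset fun _ ↦ B) ×ˢ B := by
    simp only [mem_product, Fintype.mem_piFinset] at hp ⊢
    exact ⟨(Function.forall_update_iff _ fun _ a ↦ a ∈ B).2 ⟨hp.2, fun i _ ↦ hp.1 i⟩, hp.1 j⟩
  calc ∑ u ∈ Fintype.piFinset fun _ ↦ B, ∑ b ∈ B, f (Function.update u j b)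
      = ∑ p ∈ (Fintype.piFinset fun _ ↦ B) ×ˢ B, f (Function.update p.1 j p.2) :=
        (sum_product _ _ fun p ↦ f (Function.update p.1 j p.2)).symm
    _ = ∑ p ∈ (Fintype.piFinset fun _ ↦ B) ×ˢ B, f p.1 :=
        sum_nbij' (fun p ↦ (Function.update p.1 j p.2, p.1 j))
          (fun p ↦ (Function.update p.1 j p.2, p.1 j)) (fun _ ↦ hmem) (fun _ ↦ hmem)
          (by simp) (by simp) (by simp)
    _ = ∑ u ∈ Fintype.piFinset fun _ ↦ B, #B * f u := by
        simp only [sum_product, sum_const, nsmul_eq_mul]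

theorem sum_piFinset_le_of_sum_update_le {B : Finset α} (hB : B.Nonempty) (j : ι)
    {f : (ι → α) → ℝ} {M : ℝ} (h : ∀ u, ∑ b ∈ B, f (Function.update u j b) ≤ #B * M) :
    ∑ u ∈ Fintype.piFinset fun _ ↦ B, f u ≤ #B ^ Fintype.card ι * M := by
  have hB0 : (0 : ℝ) < #B := mod_cast hB.card_pos
  refine le_of_mul_le_mul_left ?_ hB0
  calc #B * ∑ u ∈ Fintype.piFinset fun _ ↦ B, f u
      = ∑ u ∈ Fintype.piFinset fun _ ↦ B, ∑ b ∈ B, f (Function.update u j b) := by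
        rw [mul_sum, sum_piFinset_update]
    _ ≤ ∑ _u ∈ Fintype.piFinset fun _ : ι ↦ B, #B * M := sum_le_sum fun u _ ↦ h u
    _ = #B * (#B ^ Fintype.card ι * M) := by
        rw [sum_const, nsmul_eq_mul, Fintype.card_piFinset, prod_const, card_univ, Nat.cast_pow]
        ring

theorem card_filter_lt_mul_le_sum (s : Finset α) {f : α → ℝ} (hf : ∀ a ∈ s, 0 ≤ f a) (θ : ℝ) :
    #({a ∈ s | θ < f a}) * θ ≤ ∑ a ∈ s, f a := by
  calc #({a ∈ s | θ < f a}) * θ = #({a ∈ s | θ < f a}) • θ := (nsmul_eq_mul _ _).symm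
    _ ≤ ∑ a ∈ s with θ < f a, f a :=
        card_nsmul_le_sum _ _ _ fun a ha ↦ (mem_filter.1 ha).2.le
    _ ≤ ∑ a ∈ s, f a :=
        sum_le_sum_of_subset_of_nonneg (filter_subset _ _) fun a ha _ ↦ hf a ha

end Averaging

section Tuples

variable {F : Type} [Field F] {n : ℕ} {ι : Type*} [Fintype ι] [DecidableEq ι]

theorem sum_smul_update (y : ι → F) (u : ι → Fin n → F × F) (j : ι)
    (b : Fin n → F × F) :
    ∑ i, y i • Function.update u j b i = ∑ i ∈ univ.erase j, y i • u i + y j • b := by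
  rw [← sum_erase_add _ _ (mem_univ j), Function.update_self]
  congr 1
  exact sum_congr rfl fun i hi ↦ by rw [Function.update_of_ne (ne_of_mem_erase hi)]

variable [Fintype F] [DecidableEq F] {ψ : AddChar F ℂ}

theorem sum_addChar_sum_mul (hψ : ψ ≠ 1) (s : ι → F) :
    ∑ y : ι → F, ψ (∑ i, y i * s i) =
      if ∀ i, s i = 0 then (Fintype.card F : ℂ) ^ Fintype.card ι else 0 := by
  let φ : (ι → F) →ₗ[F] F := Fintype.linearCombination F s
  have hφ : φ = 0 ↔ ∀ i, s i = 0 := by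
    refine ⟨fun h i ↦ ?_, fun h ↦ by ext i; simp [φ, h]⟩
    simpa [φ] using DFunLike.congr_fun h (Pi.single i 1)
  calc ∑ y : ι → F, ψ (∑ i, y i * s i) = ∑ y : ι → F, ψ (φ y) := rfl
    _ = if ∀ i, s i = 0 then (Fintype.card F : ℂ) ^ Fintype.card ι else 0 := by
      rw [sum_addChar_comp_linearMap hψ, Fintype.card_fun, Nat.cast_pow]
      simp only [hφ]

theorem sum_sympFourier_sum_smul (hψ : ψ ≠ 1) (B : Finset (Fin n → F × F))
    (u : ι → Fin n → F × F) :
    ∑ y : ι → F, sympFourier ψ B (∑ i, y i • u i) =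
      (Fintype.card F : ℂ) ^ Fintype.card ι * #({v ∈ B | ∀ i, sympInner (u i) v = 0}) := by
  simp only [sympFourier, sympInner_sum_smul_left]
  rw [sum_comm]
  simp only [sum_addChar_sum_mul hψ]
  rw [← sum_filter, sum_const, nsmul_eq_mul, mul_comm]

theorem abs_pow_mul_card_filter_sub_card_le (hψ : ψ ≠ 1)
    (B : Finset (Fin n → F × F)) (u : ι → Fin n → F × F) :
    |(Fintype.card F : ℝ) ^ Fintype.card ι * #({v ∈ B | ∀ i, sympInner (u i) v = 0}) - #B| ≤
      ∑ y ∈ univ.erase (0 : ι → F), ‖sympFourier ψ B (∑ i, y i • u i)‖ := by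
  have hsum : (((Fintype.card F : ℝ) ^ Fintype.card ι *
      #({v ∈ B | ∀ i, sympInner (u i) v = 0}) - #B : ℝ) : ℂ) =
        ∑ y ∈ univ.erase (0 : ι → F), sympFourier ψ B (∑ i, y i • u i) := by
    rw [sum_erase_eq_sub (mem_univ 0), sum_sympFourier_sum_smul hψ]
    simp [sympFourier_zero]
  rw [← Real.norm_eq_abs, ← Complex.norm_real, hsum]
  exact norm_sum_le _ _

theorem sum_abs_pow_mul_card_filter_sub_card_le (hψ : ψ ≠ 1)
    {B : Finset (Fin n → F × F)} (hB : B.Nonempty) {K : ℝ} (hK : 0 ≤ K)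
    (h : ∀ z, ∀ y : F, y ≠ 0 → ∑ b ∈ B, ‖sympFourier ψ B (z + y • b)‖ ≤ #B * K) :
    ∑ u ∈ Fintype.piFinset fun _ : ι ↦ B,
        |(Fintype.card F : ℝ) ^ Fintype.card ι * #({v ∈ B | ∀ i, sympInner (u i) v = 0}) - #B| ≤
      (Fintype.card F : ℝ) ^ Fintype.card ι * (#B ^ Fintype.card ι * K) := by
  have hfrequency (y : ι → F) (hy : y ∈ univ.erase 0) :
      ∑ u ∈ Fintype.piFinset fun _ : ι ↦ B, ‖sympFourier ψ B (∑ i, y i • u i)‖ ≤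
        #B ^ Fintype.card ι * K := by
    obtain ⟨j, hj⟩ := Function.ne_iff.1 (ne_of_mem_erase hy)
    refine sum_piFinset_le_of_sum_update_le hB j fun u ↦ ?_
    simpa only [sum_smul_update] using h (∑ i ∈ univ.erase j, y i • u i) (y j) hj
  calc ∑ u ∈ Fintype.piFinset fun _ : ι ↦ B,
        |(Fintype.card F : ℝ) ^ Fintype.card ι * #({v ∈ B | ∀ i, sympInner (u i) v = 0}) - #B|
      ≤ ∑ u ∈ Fintype.piFinset fun _ : ι ↦ B,
        ∑ y ∈ univ.erase (0 : ι → F), ‖sympFourier ψ B (∑ i, y i • u i)‖ :=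
        sum_le_sum fun u _ ↦ abs_pow_mul_card_filter_sub_card_le hψ B u
    _ = ∑ y ∈ univ.erase (0 : ι → F), ∑ u ∈ Fintype.piFinset fun _ : ι ↦ B,
        ‖sympFourier ψ B (∑ i, y i • u i)‖ := sum_comm
    _ ≤ ∑ _y ∈ univ.erase (0 : ι → F), #B ^ Fintype.card ι * K := sum_le_sum hfrequency
    _ ≤ ∑ _y : ι → F, #B ^ Fintype.card ι * K :=
        sum_le_sum_of_subset_of_nonneg (erase_subset _ _) fun _ _ _ ↦ by positivity
    _ = (Fintype.card F : ℝ) ^ Fintype.card ι * (#B ^ Fintype.card ι * K) := by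
        rw [sum_const, nsmul_eq_mul, card_univ, Fintype.card_fun, Nat.cast_pow]

end Tuples

section Asymptotics

theorem exists_eventually_pow_mul_le {q κ : ℝ} (hq : 1 < q) (hκ0 : 0 < κ) (hκ1 : κ < 1) :
    ∃ a : ℝ, 0 < a ∧ ∀ᶠ n : ℕ in Filter.atTop, ∀ ℓ : ℕ, (ℓ : ℝ) ≤ a * n →
      q ^ ℓ * ((n + 1) ^ 2 * κ ^ n) ≤ q ^ (-(a * n)) * q ^ (-(a * n)) := by
  have hq0 : 0 < q := one_pos.trans hq
  set a : ℝ := -Real.logb q κ / 4 with ha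
  have ha0 : 0 < a := by
    have := Real.logb_neg hq hκ0 hκ1
    linarith
  have hκ (n : ℕ) : κ ^ n = q ^ (-(4 * a * n)) := by
    rw [show -(4 * a * n) = Real.logb q κ * n by rw [ha]; ring, Real.rpow_mul_natCast hq0.le,
      Real.rpow_logb hq0 hq.ne' hκ0]
  have hpoly : ∀ᶠ n : ℕ in Filter.atTop, ((n : ℝ) + 1) ^ 2 ≤ q ^ (a * n) := by
    have hlittle := isLittleO_pow_const_const_pow_of_one_lt (R := ℝ) 2 (Real.one_lt_rpow hq ha0)
    filter_upwards [hlittle.bound (c := 1 / 4) (by norm_num), Filter.eventually_ge_atTop 1]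
      with n hn hn1
    have hn1' : (1 : ℝ) ≤ n := mod_cast hn1
    rw [Real.norm_of_nonneg (by positivity), Real.norm_of_nonneg (by positivity),
      ← Real.rpow_mul_natCast hq0.le] at hn
    nlinarith
  refine ⟨a, ha0, hpoly.mono fun n hn ℓ hℓ ↦ ?_⟩
  calc q ^ ℓ * ((n + 1) ^ 2 * κ ^ n)
      ≤ q ^ (a * n) * (q ^ (a * n) * q ^ (-(4 * a * n))) := by
        rw [hκ, ← Real.rpow_natCast q ℓ]
        gcongr
        exact hq.le
    _ = q ^ (-(a * n)) * q ^ (-(a * n)) := by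
        simp only [← Real.rpow_add hq0]
        ring_nf

theorem eventually_nat_sqrt_le_mul {c : ℝ} (hc : 0 < c) :
    ∀ᶠ n : ℕ in Filter.atTop, (Nat.sqrt n : ℝ) ≤ c * n := by
  filter_upwards [Filter.eventually_ge_atTop ⌈(1 / c) ^ 2⌉₊] with n hn
  have hroot : 1 / c ≤ √n := Real.le_sqrt_of_sq_le (Nat.ceil_le.1 hn)
  calc (Nat.sqrt n : ℝ) ≤ √n := Real.nat_sqrt_le_real_sqrt
    _ = c * (1 / c * √n) := by field_simp
    _ ≤ c * (√n * √n) := by gcongr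
    _ = c * n := by rw [Real.mul_self_sqrt n.cast_nonneg]

theorem exists_eventually_isTilt (F : Type) [Field F] [DecidableEq F] [Fintype F] {δ : ℝ}
    (hδ : 0 < δ) :
    ∃ τ : ℝ, 0 < τ ∧ τ ≤ 1 ∧
      ∀ᶠ n : ℕ in Filter.atTop, ∃ t, IsTilt F n ⌊δ * n⌋₊ t ∧ τ ≤ t := by
  have hP : 0 < (Fintype.card F : ℝ) ^ 2 - 1 := by linarith [three_le_card_sq_sub_one F]
  refine ⟨min 1 (δ / (2 * ((Fintype.card F : ℝ) ^ 2 - 1))), by positivity, min_le_left _ _, ?_⟩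
  filter_upwards [Filter.eventually_ge_atTop ⌈2 / δ⌉₊] with n hn
  have hδn : 2 ≤ δ * n := (div_le_iff₀' hδ).1 (Nat.ceil_le.1 hn)
  have hn0 : (0 : ℝ) < n := pos_of_mul_pos_right (two_pos.trans_le hδn) hδ.le
  have hfloor := Nat.sub_one_lt_floor (δ * n)
  obtain ⟨t, ht, hmin⟩ := exists_isTilt (F := F) n (Nat.floor_pos.2 (one_le_two.trans hδn))
  refine ⟨t, ht, le_trans ?_ hmin⟩
  gcongr min 1 ?_
  rw [div_le_div_iff₀ (by positivity) (by positivity)]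
  nlinarith

end Asymptotics

section IntersectionBound

theorem two_sided_div_mul_iff_abs_sub_le {Q V c ε : ℝ} (hQ : 0 < Q) :
    ((1 - ε) / Q * V ≤ c ∧ c ≤ (1 + ε) / Q * V) ↔ |Q * c - V| ≤ ε * V := by
  rw [div_mul_eq_mul_div, div_mul_eq_mul_div, div_le_iff₀' hQ, le_div_iff₀' hQ, abs_le]
  constructor <;> rintro ⟨_, _⟩ <;> constructor <;> linarith

theorem card_deviating_tuples_mul_le {F : Type} [Field F] [Fintype F] [DecidableEq F] {n r : ℕ}
    {t : ℝ} (ht : IsTilt F n r t) (ι : Type*) [Fintype ι] [DecidableEq ι] (ε : ℝ) :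
    #({u ∈ Fintype.piFinset fun _ : ι ↦ sympBall F n r | ε * #(sympBall F n r) <
      |(Fintype.card F : ℝ) ^ Fintype.card ι *
        #({v ∈ sympBall F n r | ∀ i, sympInner (u i) v = 0}) - #(sympBall F n r)|}) * ε ≤
      (Fintype.card F : ℝ) ^ Fintype.card ι * ((n + 1) ^ 2 * (1 - t ^ 2 / 4) ^ n) *
        #(sympBall F n r) ^ Fintype.card ι := by
  obtain ⟨ψ, hψ⟩ : ∃ ψ : AddChar F ℂ, ψ ≠ 1 :=
    (AddChar.exists_apply_ne_zero.2 one_ne_zero).imp fun ψ h ↦ AddChar.ne_one_iff.2 ⟨1, h⟩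
  have hB : (0 : ℝ) < #(sympBall F n r) := mod_cast (sympBall_nonempty n r).card_pos
  have hbase : 0 ≤ 1 - t ^ 2 / 4 := by nlinarith [ht.1, ht.2.1]
  refine le_of_mul_le_mul_right ?_ hB
  have hmean := sum_abs_pow_mul_card_filter_sub_card_le (ι := ι) hψ (sympBall_nonempty n r)
    (by positivity) fun z y hy ↦ sum_norm_sympFourier_add_smul_le hψ ht z hy
  have hmarkov := le_trans
    (card_filter_lt_mul_le_sum _ (fun _ _ ↦ abs_nonneg _) (ε * #(sympBall F n r))) hmean
  linear_combination hmarkov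

theorem symp_l_vector_intersection_bound_general
    (q : ℕ) (F : Type) [Field F] [Fintype F] [DecidableEq F] (hF : Fintype.card F = q)
    {δ : ℝ} (hδ : 0 < δ) :
    ∃ c : ℝ, 0 < c ∧ ∃ c' : ℝ, 0 < c' ∧ ∀ᶠ n : ℕ in Filter.atTop, ∀ ℓ : ℕ, (ℓ : ℝ) ≤ c * n →
      (#{u : Fin ℓ → Fin n → F × F | (∀ i, u i ∈ sympBall F n ⌊δ * n⌋₊) ∧
          ¬ ((1 - (q : ℝ) ^ (-(c * n))) / (q : ℝ) ^ ℓ * volS q n ⌊δ * n⌋₊ ≤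
                #{v ∈ sympBall F n ⌊δ * n⌋₊ | ∀ i, sympInner (u i) v = 0} ∧
              #{v ∈ sympBall F n ⌊δ * n⌋₊ | ∀ i, sympInner (u i) v = 0} ≤
                (1 + (q : ℝ) ^ (-(c * n))) / (q : ℝ) ^ ℓ * volS q n ⌊δ * n⌋₊)} : ℝ) ≤
        (q : ℝ) ^ (-(c' * n)) * (volS q n ⌊δ * n⌋₊ : ℝ) ^ ℓ := by
  subst hF
  have hq : (1 : ℝ) < Fintype.card F := mod_cast Fintype.one_lt_card
  obtain ⟨τ, hτ0, hτ1, htilt⟩ := exists_eventually_isTilt F hδ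
  obtain ⟨a, ha0, hdecay⟩ := exists_eventually_pow_mul_le hq (κ := 1 - τ ^ 2 / 4)
    (by nlinarith) (by nlinarith)
  refine ⟨a, ha0, a, ha0, ?_⟩
  filter_upwards [htilt, hdecay] with n ⟨t, ht, hτt⟩ hdecay ℓ hℓ
  set ε : ℝ := (Fintype.card F : ℝ) ^ (-(a * n))
  have hε : 0 < ε := by positivity
  have hbase : 0 ≤ 1 - t ^ 2 / 4 := by nlinarith [ht.1, ht.2.1]
  simp only [two_sided_div_mul_iff_abs_sub_le (pow_pos (one_pos.trans hq) ℓ), not_le,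
    ← card_sympBall]
  refine le_of_mul_le_mul_right ?_ hε
  calc _ ≤ (#{u ∈ Fintype.piFinset fun _ : Fin ℓ ↦ sympBall F n ⌊δ * n⌋₊ |
          ε * #(sympBall F n ⌊δ * n⌋₊) < |(Fintype.card F : ℝ) ^ ℓ *
            #{v ∈ sympBall F n ⌊δ * n⌋₊ | ∀ i, sympInner (u i) v = 0} -
              #(sympBall F n ⌊δ * n⌋₊)|} : ℝ) * ε := by
        gcongr
        exact fun u hu ↦ mem_filter.2 ((mem_filter.1 hu).2.imp_left Fintype.mem_piFinset.2)
    _ ≤ (Fintype.card F : ℝ) ^ ℓ * ((n + 1) ^ 2 * (1 - t ^ 2 / 4) ^ n) *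
          #(sympBall F n ⌊δ * n⌋₊) ^ ℓ := by
        convert card_deviating_tuples_mul_le ht (Fin ℓ) ε <;> exact (Fintype.card_fin ℓ).symm
    _ ≤ ε * ε * #(sympBall F n ⌊δ * n⌋₊) ^ ℓ := by
        gcongr ?_ * _
        refine le_trans ?_ (hdecay ℓ hℓ)
        gcongr
    _ = ε * #(sympBall F n ⌊δ * n⌋₊) ^ ℓ * ε := by ring

end IntersectionBound

/-- For a prime power `q` (realized as the cardinality of a finite field `F`)
and a constant `δ ∈ (0, 1 - 1/q²)`, there exist `c, c' > 0` such that for all sufficiently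
large `n`, with `d - 1 = ⌊δn⌋` and `ℓ = ⌊√n⌋`: the number of `ℓ`-tuples of vectors of
`B_q^S(2n, d-1)` for which the two-sided estimate
`((1 ∓ q^{-cn})/q^ℓ)·Vol_q^S(2n,d-1)` on `|B_q^S(2n,d-1) ∩ ⋂_i ⟨u_i⟩^{⊥_S}|` fails is at most
`q^{-c'n} · Vol_q^S(2n, d-1)^ℓ`. -/
theorem symp_l_vector_intersection_bound
    (q : ℕ) (F : Type) [Field F] [Fintype F] [DecidableEq F] (hF : Fintype.card F = q)
    (δ : ℝ) (hδ0 : 0 < δ) (hδ : δ < 1 - 1 / (q : ℝ) ^ 2) :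
    ∃ c : ℝ, 0 < c ∧ ∃ c' : ℝ, 0 < c' ∧ ∃ N : ℕ, ∀ n : ℕ, N ≤ n →
      (((Finset.univ : Finset (Fin (Nat.sqrt n) → Fin n → F × F)).filter fun u =>
          (∀ i, u i ∈ sympBall F n ⌊δ * (n : ℝ)⌋₊) ∧
            ¬ ((1 - (q : ℝ) ^ (-(c * (n : ℝ)))) / (q : ℝ) ^ (Nat.sqrt n) *
                  (volS q n ⌊δ * (n : ℝ)⌋₊ : ℝ) ≤
                (((sympBall F n ⌊δ * (n : ℝ)⌋₊).filter fun v =>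
                    ∀ i, sympInner (u i) v = 0).card : ℝ) ∧
                (((sympBall F n ⌊δ * (n : ℝ)⌋₊).filter fun v =>
                    ∀ i, sympInner (u i) v = 0).card : ℝ) ≤
                (1 + (q : ℝ) ^ (-(c * (n : ℝ)))) / (q : ℝ) ^ (Nat.sqrt n) *
                  (volS q n ⌊δ * (n : ℝ)⌋₊ : ℝ))).card : ℝ) ≤
        (q : ℝ) ^ (-(c' * (n : ℝ))) * (volS q n ⌊δ * (n : ℝ)⌋₊ : ℝ) ^ (Nat.sqrt n) := by
  obtain ⟨c, hc, c', hc', hbound⟩ := symp_l_vector_intersection_bound_general q F hF hδ0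
  obtain ⟨N, hN⟩ := Filter.eventually_atTop.1 (hbound.and (eventually_nat_sqrt_le_mul hc))
  exact ⟨c, hc, c', hc', N, fun n hn ↦ (hN n hn).1 _ (hN n hn).2⟩
end

section
/- Let q be a prime power and let δ ∈ (0, 1 − 1/q²) be a constant. Then there exists a constant h_δ ∈ (0,1), depending only on q and δ, such that for all sufficiently large n the following holds: for every integer ℓ with 2 ≤ ℓ ≤ n, if v_1, …, v_ℓ are independent random vectors each distributed uniformly in the symplectic ball B_q^S(2n, ⌊δn⌋) ⊆ 𝔽_q^{2n}, then the probability that v_1 + v_2 + ⋯ + v_ℓ ∈ B_q^S(2n, ⌊δn⌋) is at most 2^{−h_δ n}. -/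
open Finset
open scoped Classical

/-!
Let `Q = |G|` and let `B` be the Hamming ball of radius `r = ⌊δn⌋` in `G ^ n`. Choose `y ∈ (0, 1)`
with `(1 - δ)(Q - 1)y³ = δ`.

Since `r` is nearly a mode of the binomial distribution with parameters `n` and `δ`, up to a factor
polynomial in `n` the ball satisfies `|B| (1 - δ)ⁿ y³ʳ ≥ 1`. On the other hand, giving every
nonzero coordinate of `u`, `v` and `u + v + w` the weight `y²` makes the sum over all pairs `(u, v)`
factor over the coordinates, where each factor is largest for `wᵢ = 0`, with value
`D = 1 + 3(Q - 1)y⁴ + (Q - 1)(Q - 2)y⁶`. This bounds the number of pairs in `B × B` with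
`u + v + w ∈ B` by `y⁻⁶ʳ Dⁿ`, uniformly in `w`, hence by `((1 - δ)² D)ⁿ |B|²` up to a polynomial
factor, and `(1 - δ)² D = 1 - δ(1 - δ)(1 - y)²(y + 2) < 1`. Conditioning on all but two of the
vectors extends this to any number of summands.
-/

section BinomialMode

open scoped Nat

variable {δ : ℝ} {n : ℕ}

lemma factorial_mul_pow_le_factorial_mul_pow {c : ℝ} {r : ℕ} (hrc : r ≤ c) (hcr : c ≤ r + 1)
    (k : ℕ) : r ! * c ^ k ≤ k ! * c ^ r := by
  have hc : 0 ≤ c := r.cast_nonneg.trans hrc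
  rcases le_total r k with hrk | hkr
  · obtain ⟨j, rfl⟩ := Nat.exists_eq_add_of_le hrk
    calc (r ! : ℝ) * c ^ (r + j) = r ! * c ^ j * c ^ r := by ring
      _ ≤ r ! * (r + 1) ^ j * c ^ r := by gcongr
      _ ≤ (r + j)! * c ^ r := by
        gcongr
        exact_mod_cast Nat.factorial_mul_pow_le_factorial
  · obtain ⟨j, rfl⟩ := Nat.exists_eq_add_of_le hkr
    have hdesc : (k + j)! ≤ k ! * (k + j) ^ j := by
      rw [← Nat.factorial_mul_descFactorial (Nat.le_add_left j k), Nat.add_sub_cancel]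
      gcongr
      exact Nat.descFactorial_le_pow _ _
    calc ((k + j)! : ℝ) * c ^ k ≤ k ! * ((k + j : ℕ) : ℝ) ^ j * c ^ k := by
          gcongr
          exact_mod_cast hdesc
      _ ≤ k ! * c ^ j * c ^ k := by gcongr
      _ = k ! * c ^ (k + j) := by ring

lemma mul_factorial_mul_pow_le_mul_factorial_mul_pow {c : ℝ} {s : ℕ} (hc : 0 ≤ c) (hcs : c ≤ s)
    (hsc : s ≤ c + 1) (k : ℕ) : c * (s ! * c ^ k) ≤ s * (k ! * c ^ s) := by
  cases s with
  | zero =>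
    obtain rfl : c = 0 := le_antisymm (by simpa using hcs) hc
    simp
  | succ s =>
    push_cast at hcs hsc
    calc c * ((s + 1)! * c ^ k) = c * (s + 1) * (s ! * c ^ k) := by
          rw [Nat.factorial_succ]
          push_cast
          ring
      _ ≤ c * (s + 1) * (k ! * c ^ s) := by
          gcongr c * (s + 1) * ?_
          exact factorial_mul_pow_le_factorial_mul_pow (by linarith) hcs k
      _ = ((s + 1 : ℕ) : ℝ) * (k ! * c ^ (s + 1)) := by
          push_cast
          ring

lemma floor_mul_natCast_le (hδ : δ ≤ 1) : ⌊δ * n⌋₊ ≤ n :=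
  Nat.floor_le_of_le (mul_le_of_le_one_left n.cast_nonneg hδ)

lemma one_sub_mul_binomial_le_binomial_floor (hδ0 : 0 ≤ δ) (hδ1 : δ < 1) {k : ℕ} (hk : k ≤ n) :
    (1 - δ) * (n.choose k * δ ^ k * (1 - δ) ^ (n - k)) ≤
      n.choose ⌊δ * n⌋₊ * δ ^ ⌊δ * n⌋₊ * (1 - δ) ^ (n - ⌊δ * n⌋₊) := by
  obtain rfl | hn := n.eq_zero_or_pos
  · obtain rfl : k = 0 := Nat.le_zero.1 hk
    simp [hδ0]
  have hδ : 0 < 1 - δ := sub_pos.2 hδ1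
  have hsplit {j : ℕ} (hj : j ≤ n) : (n : ℝ) ^ j * n ^ (n - j) = n ^ n := by
    rw [← pow_add, Nat.add_sub_cancel' hj]
  have hr := floor_mul_natCast_le (n := n) hδ1.le
  have hfloor_le : (⌊δ * n⌋₊ : ℝ) ≤ δ * n := Nat.floor_le (by positivity)
  have hlt_floor : δ * n < ⌊δ * n⌋₊ + 1 := Nat.lt_floor_add_one _
  set r := ⌊δ * n⌋₊
  have hsub : ((n - r : ℕ) : ℝ) = n - r := Nat.cast_sub hr
  have hsuccess : r ! * (δ * n) ^ k ≤ k ! * (δ * n) ^ r :=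
    factorial_mul_pow_le_factorial_mul_pow hfloor_le hlt_floor.le k
  have hfailure : (1 - δ) * ((n - r)! * ((1 - δ) * n) ^ (n - k)) ≤
      (n - k)! * ((1 - δ) * n) ^ (n - r) := by
    have hmode := mul_factorial_mul_pow_le_mul_factorial_mul_pow (c := (1 - δ) * n) (s := n - r)
      (by positivity) (by linarith) (by linarith) (n - k)
    refine le_of_mul_le_mul_left ?_ (Nat.cast_pos.2 hn)
    calc _ = (1 - δ) * n * ((n - r)! * ((1 - δ) * n) ^ (n - k)) := by ring
      _ ≤ _ := hmode
      _ ≤ _ := by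
        gcongr
        exact n.sub_le r
  rw [Nat.cast_choose ℝ hk, Nat.cast_choose ℝ hr]
  set C : ℝ := n ! / (n ^ n * k ! * (n - k)! * r ! * (n - r)!) with hC
  calc _ = C * ((r ! * (δ * n) ^ k) * ((1 - δ) * ((n - r)! * ((1 - δ) * n) ^ (n - k)))) := by
        rw [hC, ← hsplit hk, mul_pow, mul_pow]
        field_simp
    _ ≤ C * ((k ! * (δ * n) ^ r) * ((n - k)! * ((1 - δ) * n) ^ (n - r))) := by
        gcongr
    _ = _ := by
        rw [hC, ← hsplit hr, mul_pow, mul_pow]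
        field_simp

lemma one_sub_le_mul_binomial_floor (hδ0 : 0 ≤ δ) (hδ1 : δ < 1) :
    1 - δ ≤ (n + 1) * (n.choose ⌊δ * n⌋₊ * δ ^ ⌊δ * n⌋₊ * (1 - δ) ^ (n - ⌊δ * n⌋₊)) := by
  have htotal : ∑ k ∈ range (n + 1), n.choose k * δ ^ k * (1 - δ) ^ (n - k) = 1 := by
    simpa [mul_comm, mul_left_comm, mul_assoc] using (add_pow δ (1 - δ) n).symm
  calc 1 - δ = ∑ k ∈ range (n + 1), (1 - δ) * (n.choose k * δ ^ k * (1 - δ) ^ (n - k)) := by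
        rw [← mul_sum, htotal, mul_one]
    _ ≤ ∑ _k ∈ range (n + 1),
          n.choose ⌊δ * n⌋₊ * δ ^ ⌊δ * n⌋₊ * (1 - δ) ^ (n - ⌊δ * n⌋₊) :=
        sum_le_sum fun k hk =>
          one_sub_mul_binomial_le_binomial_floor hδ0 hδ1 (Nat.lt_succ_iff.1 (mem_range.1 hk))
    _ = _ := by simp

end BinomialMode

section HammingBall

lemma pow_hammingNorm {ι G R : Type*} [Fintype ι] [DecidableEq G] [Zero G] [CommSemiring R] (x : R)
    (v : ι → G) : x ^ hammingNorm v = ∏ i, if v i = 0 then 1 else x := by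
  simp [hammingNorm, prod_ite]

/-- The Hamming ball of radius `r` around `0` in `G ^ ι`; `sympBall F n r` is by definition the
case `ι = Fin n`, `G = F × F`. -/
def hammingBall (ι G : Type*) [Fintype ι] [DecidableEq ι] [Fintype G] [DecidableEq G] [Zero G]
    (r : ℕ) : Finset (ι → G) :=
  {v | hammingNorm v ≤ r}

variable {ι G : Type*} [Fintype ι] [DecidableEq ι] [Fintype G] [DecidableEq G]

@[simp]
lemma mem_hammingBall [Zero G] {r : ℕ} {v : ι → G} :
    v ∈ hammingBall ι G r ↔ hammingNorm v ≤ r := by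
  simp [hammingBall]

lemma card_filter_support_eq [Zero G] (s : Finset ι) :
    #{v : ι → G | ({i | v i ≠ 0} : Finset ι) = s} = (Fintype.card G - 1) ^ #s := by
  have hpi : ({v | ({i | v i ≠ 0} : Finset ι) = s} : Finset (ι → G)) =
      Fintype.piFinset fun i => if i ∈ s then {0}ᶜ else {0} := by
    ext v
    rw [mem_filter_univ, Fintype.mem_piFinset, Finset.ext_iff]
    refine forall_congr' fun i => ?_
    split_ifs with hi <;> simp [hi]
  rw [hpi, Fintype.card_piFinset]
  simp [apply_ite Finset.card, card_compl]

lemma card_filter_hammingNorm_eq [Zero G] (r : ℕ) :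
    #{v : ι → G | hammingNorm v = r} =
      (Fintype.card ι).choose r * (Fintype.card G - 1) ^ r := by
  rw [card_eq_sum_card_fiberwise (f := fun v : ι → G => ({i | v i ≠ 0} : Finset ι))
    (t := powersetCard r univ) fun v hv => by simpa [hammingNorm] using hv]
  calc _ = ∑ s ∈ powersetCard r (univ : Finset ι), (Fintype.card G - 1) ^ r := by
        refine sum_congr rfl fun s hs => ?_
        have hs' : #s = r := (mem_powersetCard.1 hs).2
        rw [filter_filter, ← hs', ← card_filter_support_eq s]
        congr 1
        refine filter_congr fun v _ => and_iff_right_of_imp ?_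
        rintro rfl
        rfl
    _ = _ := by simp

lemma one_sub_le_mul_card_hammingBall [Zero G] {δ t : ℝ} (hδ0 : 0 ≤ δ) (hδ1 : δ < 1)
    (ht0 : 0 ≤ t) (ht : (1 - δ) * ((Fintype.card G - 1) * t) = δ) :
    1 - δ ≤ (Fintype.card ι + 1) * ((1 - δ) ^ Fintype.card ι * t ^ ⌊δ * Fintype.card ι⌋₊ *
      #(hammingBall ι G ⌊δ * Fintype.card ι⌋₊)) := by
  refine (one_sub_le_mul_binomial_floor (n := Fintype.card ι) hδ0 hδ1).trans ?_
  gcongr (Fintype.card ι + 1) * ?_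
  have : 0 ≤ 1 - δ := sub_nonneg.2 hδ1.le
  set n := Fintype.card ι
  set r := ⌊δ * n⌋₊
  have hrn : r ≤ n := floor_mul_natCast_le hδ1.le
  have hball : (n.choose r : ℝ) * (Fintype.card G - 1) ^ r ≤ #(hammingBall ι G r) := by
    rw [← Nat.cast_pred Fintype.card_pos]
    exact_mod_cast (card_filter_hammingNorm_eq r).symm.le.trans
      (card_le_card fun v hv => by simpa using (mem_filter.1 hv).2.le)
  calc n.choose r * δ ^ r * (1 - δ) ^ (n - r)
      = n.choose r * ((1 - δ) * ((Fintype.card G - 1) * t)) ^ r * (1 - δ) ^ (n - r) := by rw [ht]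
    _ = (1 - δ) ^ (r + (n - r)) * t ^ r * (n.choose r * (Fintype.card G - 1) ^ r) := by
      rw [mul_pow, mul_pow]
      ring
    _ ≤ (1 - δ) ^ n * t ^ r * #(hammingBall ι G r) := by
      rw [Nat.add_sub_cancel' hrn]
      gcongr

end HammingBall

section TripleCorrelation

variable {ι G : Type*} [Fintype ι] [DecidableEq ι] [Fintype G] [DecidableEq G] [AddCommGroup G]

lemma sum_add_ite_mul_add_ite {R : Type*} [CommRing R] (x s x' s' : R) (c : G) :
    ∑ a : G, (x + if a = 0 then s else 0) * (x' + if a + c = 0 then s' else 0) =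
      Fintype.card G * x * x' + s * x' + x * s' + if c = 0 then s * s' else 0 := by
  simp only [add_mul, mul_add, sum_add_distrib, add_eq_zero_iff_eq_neg, ite_mul, mul_ite,
    zero_mul, mul_zero]
  simp only [sum_const, card_univ, nsmul_eq_mul, sum_ite_eq', mem_univ, if_true, neg_eq_zero]
  ring

lemma sum_weight_triple {R : Type*} [CommRing R] (x : R) (c : G) :
    ∑ a : G, ∑ b : G, (if a = 0 then 1 else x) * (if b = 0 then 1 else x) *
        (if a + b + c = 0 then 1 else x) =
      1 + 3 * (Fintype.card G - 1) * x ^ 2 + (Fintype.card G - 1) * (Fintype.card G - 2) * x ^ 3 -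
        if c = 0 then 0 else (1 - x) ^ 3 := by
  have hweight (a : G) : (if a = 0 then 1 else x) = x + if a = 0 then 1 - x else 0 := by
    split_ifs <;> ring
  simp only [hweight, mul_assoc, ← mul_sum]
  simp only [add_right_comm _ _ c, add_comm (_ + c), sum_add_ite_mul_add_ite]
  split_ifs <;> ring

lemma sum_pow_hammingNorm_triple {R : Type*} [CommRing R] (x : R) (w : ι → G) :
    ∑ u : ι → G, ∑ v : ι → G,
        x ^ hammingNorm u * x ^ hammingNorm v * x ^ hammingNorm (u + v + w) =
      ∏ i, ∑ a : G, ∑ b : G, (if a = 0 then 1 else x) * (if b = 0 then 1 else x) *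
        (if a + b + w i = 0 then 1 else x) := by
  simp only [Fintype.prod_sum, pow_hammingNorm, prod_mul_distrib, Pi.add_apply]

lemma card_pairs_add_mem_mul_pow_le (r : ℕ) (w : ι → G) {x : ℝ} (hx0 : 0 ≤ x) (hx1 : x ≤ 1) :
    #{p ∈ hammingBall ι G r ×ˢ hammingBall ι G r | p.1 + p.2 + w ∈ hammingBall ι G r} *
        x ^ (3 * r) ≤
      (1 + 3 * (Fintype.card G - 1) * x ^ 2 +
        (Fintype.card G - 1) * (Fintype.card G - 2) * x ^ 3) ^ Fintype.card ι := by
  set weight : (ι → G) × (ι → G) → ℝ := fun p =>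
    x ^ hammingNorm p.1 * x ^ hammingNorm p.2 * x ^ hammingNorm (p.1 + p.2 + w) with hweight
  calc _ = ∑ p ∈ hammingBall ι G r ×ˢ hammingBall ι G r with p.1 + p.2 + w ∈ hammingBall ι G r,
          x ^ (3 * r) := by simp
    _ ≤ ∑ p ∈ hammingBall ι G r ×ˢ hammingBall ι G r with p.1 + p.2 + w ∈ hammingBall ι G r,
          weight p := by
        refine sum_le_sum fun p hp => ?_
        simp only [mem_filter, mem_product, mem_hammingBall] at hp
        simp only [hweight, ← pow_add]
        exact pow_le_pow_of_le_one hx0 hx1 (by lia)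
    _ ≤ ∑ p, weight p := sum_le_univ_sum_of_nonneg fun p => by positivity
    _ = ∏ i, ∑ a : G, ∑ b : G, (if a = 0 then 1 else x) * (if b = 0 then 1 else x) *
          (if a + b + w i = 0 then 1 else x) := by
        rw [Fintype.sum_prod_type, sum_pow_hammingNorm_triple]
    _ ≤ ∏ _i : ι, (1 + 3 * (Fintype.card G - 1) * x ^ 2 +
          (Fintype.card G - 1) * (Fintype.card G - 2) * x ^ 3) := by
        refine prod_le_prod (fun i _ => ?_) fun i _ => ?_
        · exact sum_nonneg fun a _ => sum_nonneg fun b _ => by positivity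
        · rw [sum_weight_triple]
          exact sub_le_self _ (by split_ifs <;> simp [hx1])
    _ = _ := by simp

end TripleCorrelation

section SumEscape

open Filter Asymptotics Topology

lemma card_tuples_sum_mem_le {V : Type*} [AddCommMonoid V] [DecidableEq V] (B : Finset V) {K : ℝ}
    (hK : ∀ w, #{p ∈ B ×ˢ B | p.1 + p.2 + w ∈ B} ≤ K) (k : ℕ) :
    #{v ∈ Fintype.piFinset fun _ : Fin (k + 2) => B | ∑ i, v i ∈ B} ≤ K * #B ^ k := by
  set tail : (Fin (k + 2) → V) → Fin k → V := fun v i => v i.succ.succ with htail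
  rw [card_eq_sum_card_fiberwise (f := tail) (t := Fintype.piFinset fun _ => B) fun v hv => by
    simp only [coe_filter, Set.mem_ofPred_eq, Fintype.mem_piFinset] at hv
    simpa [htail] using fun i => hv.1 _]
  have hfiber (t : Fin k → V) :
      #{v ∈ {v ∈ Fintype.piFinset fun _ => B | ∑ i, v i ∈ B} | tail v = t} ≤ K := by
    refine le_trans ?_ (hK (∑ i, t i))
    rw [Nat.cast_le]
    refine card_le_card_of_injOn (fun v => (v 0, v 1)) (fun v hv => ?_) fun v hv v' hv' h => ?_
    · simp only [coe_filter, mem_filter, Fintype.mem_piFinset, Set.mem_ofPred_eq,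
        Fin.sum_univ_succ (n := k + 1), Fin.sum_univ_succ (n := k)] at hv
      obtain ⟨⟨hB, hsum⟩, rfl⟩ := hv
      simpa [hB, add_assoc, htail] using hsum
    · simp only [coe_filter, Set.mem_ofPred_eq] at hv hv'
      simp only [Prod.mk.injEq] at h
      exact funext <| Fin.cases h.1 <| Fin.cases h.2 <| congrFun (hv.2.trans hv'.2.symm)
  push_cast
  calc _ ≤ ∑ _t ∈ Fintype.piFinset fun _ : Fin k => B, K := sum_le_sum fun t _ => hfiber t
    _ = _ := by simp [mul_comm]

lemma exists_eventually_mul_add_one_pow_mul_pow_le {ρ : ℝ} (hρ0 : 0 ≤ ρ) (hρ1 : ρ < 1) (C : ℝ)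
    (k : ℕ) : ∃ h : ℝ, 0 < h ∧ h < 1 ∧
      ∀ᶠ n : ℕ in atTop, C * (n + 1) ^ k * ρ ^ n ≤ (2 : ℝ) ^ (-(h * n)) := by
  have hcont : Tendsto (fun h : ℝ => (2 : ℝ) ^ (-h)) (𝓝[>] 0) (𝓝 1) := by
    have : Continuous fun h : ℝ => (2 : ℝ) ^ (-h) := by fun_prop (disch := norm_num)
    exact (this.tendsto' 0 1 (by simp)).mono_left nhdsWithin_le_nhds
  obtain ⟨h, hρh, hh0, hh1⟩ :=
    ((hcont.eventually_const_lt hρ1).and (Ioo_mem_nhdsGT one_pos)).exists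
  refine ⟨h, hh0, hh1, ?_⟩
  have hpoly : (fun n : ℕ => C * ((n : ℝ) + 1) ^ k) =O[atTop] fun n : ℕ => (n : ℝ) ^ k := by
    refine (IsBigO.pow ?_ k).const_mul_left C
    refine IsBigO.of_bound 2 ?_
    filter_upwards [eventually_ge_atTop 1] with n hn
    have hn' : (1 : ℝ) ≤ n := by exact_mod_cast hn
    rw [Real.norm_of_nonneg (by positivity), Real.norm_of_nonneg (by positivity)]
    linarith
  have hlittle := (hpoly.mul (isBigO_refl (fun n : ℕ => ρ ^ n) atTop)).trans_isLittleO
    (isLittleO_pow_const_mul_const_pow_const_pow_of_norm_lt k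
      (by rwa [Real.norm_of_nonneg hρ0]))
  filter_upwards [hlittle.bound one_pos] with n hn
  calc _ ≤ ‖C * ((n : ℝ) + 1) ^ k * ρ ^ n‖ := Real.le_norm_self _
    _ ≤ ((2 : ℝ) ^ (-h)) ^ n := by
      simpa [Real.norm_of_nonneg (Real.rpow_nonneg zero_le_two (-h))] using hn
    _ = _ := by rw [← Real.rpow_mul_natCast zero_le_two, neg_mul]

lemma card_pairs_add_mem_hammingBall_le {ι G : Type*} [Fintype ι] [DecidableEq ι] [Fintype G]
    [DecidableEq G] [AddCommGroup G] {δ y : ℝ} (hδ0 : 0 ≤ δ) (hδ1 : δ < 1) (hy0 : 0 < y)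
    (hy1 : y ≤ 1) (hy : (1 - δ) * ((Fintype.card G - 1) * y ^ 3) = δ) {r : ℕ}
    (hr : r = ⌊δ * Fintype.card ι⌋₊) (w : ι → G) :
    #{p ∈ hammingBall ι G r ×ˢ hammingBall ι G r | p.1 + p.2 + w ∈ hammingBall ι G r} ≤
      ((1 - δ) ^ 2)⁻¹ * (Fintype.card ι + 1) ^ 2 *
        (1 - δ * (1 - δ) * ((1 - y) ^ 2 * (y + 2))) ^ Fintype.card ι *
        #(hammingBall ι G r) ^ 2 := by
  have hδ : 0 < 1 - δ := sub_pos.2 hδ1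
  have hlower := one_sub_le_mul_card_hammingBall (ι := ι) hδ0 hδ1 (pow_nonneg hy0.le 3) hy
  have hupper := card_pairs_add_mem_mul_pow_le r w (sq_nonneg y) (pow_le_one₀ hy0.le hy1)
  rw [← hr] at hlower
  set n := Fintype.card ι
  set Q : ℝ := (Fintype.card G : ℝ)
  set S := {p ∈ hammingBall ι G r ×ˢ hammingBall ι G r | p.1 + p.2 + w ∈ hammingBall ι G r}
  set D : ℝ := 1 + 3 * (Q - 1) * (y ^ 2) ^ 2 + (Q - 1) * (Q - 2) * (y ^ 2) ^ 3 with hD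
  have hgap : (1 - δ) ^ 2 * D = 1 - δ * (1 - δ) * ((1 - y) ^ 2 * (y + 2)) := by
    rw [hD]
    linear_combination ((1 - δ) * (Q - 1) * y ^ 3 + δ + (1 - δ) * (3 * y - y ^ 3)) * hy
  refine le_of_mul_le_mul_left ?_ (pow_pos hδ 2)
  calc (1 - δ) ^ 2 * (#S : ℝ)
      ≤ ((n + 1) * ((1 - δ) ^ n * (y ^ 3) ^ r * #(hammingBall ι G r))) ^ 2 * #S := by gcongr
    _ = ((n + 1) * (1 - δ) ^ n * #(hammingBall ι G r)) ^ 2 * (#S * (y ^ 2) ^ (3 * r)) := by ring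
    _ ≤ ((n + 1) * (1 - δ) ^ n * #(hammingBall ι G r)) ^ 2 * D ^ n := by gcongr
    _ = (n + 1) ^ 2 * ((1 - δ) ^ 2 * D) ^ n * #(hammingBall ι G r) ^ 2 := by
      rw [mul_pow _ D, pow_right_comm (1 - δ)]
      ring
    _ = _ := by
      rw [hgap]
      field_simp

lemma exists_cube_weight {δ Q : ℝ} (hδ0 : 0 < δ) (hδ1 : δ < 1 - 1 / Q) (hQ : 1 < Q) :
    ∃ y : ℝ, 0 < y ∧ y < 1 ∧ (1 - δ) * ((Q - 1) * y ^ 3) = δ := by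
  have hQ0 : 0 < Q := one_pos.trans hQ
  have hδ : 0 < 1 - δ := by linarith [one_div_pos.2 hQ0]
  have hQ1 : 0 < Q - 1 := sub_pos.2 hQ
  set t := δ / ((1 - δ) * (Q - 1)) with ht
  have ht0 : 0 < t := by positivity
  have ht1 : t < 1 := by
    rw [ht, div_lt_one (by positivity)]
    have : δ * Q < Q - 1 := by
      simpa [sub_mul, hQ0.ne'] using mul_lt_mul_of_pos_right hδ1 hQ0
    linarith
  refine ⟨t ^ (((3 : ℕ) : ℝ)⁻¹), by positivity, Real.rpow_lt_one ht0.le ht1 (by positivity), ?_⟩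
  rw [Real.rpow_inv_natCast_pow ht0.le three_ne_zero, ht]
  field_simp

theorem sympBall_sum_escape_general (G : Type*) [AddCommGroup G] [Fintype G] [DecidableEq G]
    (δ : ℝ) (hδ0 : 0 < δ) (hδ1 : δ < 1 - 1 / (Fintype.card G : ℝ)) :
    ∃ h : ℝ, 0 < h ∧ h < 1 ∧ ∃ N : ℕ, ∀ n : ℕ, N ≤ n → ∀ ℓ : ℕ, 2 ≤ ℓ →
      (#{v : Fin ℓ → Fin n → G | (∀ i, v i ∈ hammingBall (Fin n) G ⌊δ * (n : ℝ)⌋₊) ∧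
          ∑ i, v i ∈ hammingBall (Fin n) G ⌊δ * (n : ℝ)⌋₊} : ℝ) ≤
        (2 : ℝ) ^ (-(h * (n : ℝ))) * (#(hammingBall (Fin n) G ⌊δ * (n : ℝ)⌋₊) : ℝ) ^ ℓ := by
  have hcard : (1 : ℝ) ≤ Fintype.card G := by exact_mod_cast Fintype.card_pos
  have hcard' : 1 < (Fintype.card G : ℝ) := by
    refine hcard.lt_of_ne fun h => ?_
    rw [← h] at hδ1
    linarith
  have hδ : 0 < 1 - δ := by linarith [one_div_pos.2 (one_pos.trans hcard')]
  obtain ⟨y, hy0, hy1, hy⟩ := exists_cube_weight hδ0 hδ1 hcard'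
  set gap := δ * (1 - δ) * ((1 - y) ^ 2 * (y + 2)) with hgap
  have hgap0 : 0 < gap := by
    have : 0 < 1 - y := sub_pos.2 hy1
    positivity
  have hgap1 : gap ≤ 1 := by
    have hδ_half : δ * (1 - δ) ≤ 1 / 2 := by nlinarith [sq_nonneg (δ - 1 / 2)]
    have hy_two : (1 - y) ^ 2 * (y + 2) ≤ 2 := by
      linarith [pow_le_of_le_one hy0.le hy1.le three_ne_zero]
    calc gap ≤ 1 / 2 * 2 := by
          rw [hgap]
          gcongr
      _ = 1 := by norm_num
  obtain ⟨h, hh0, hh1, hdecay⟩ := exists_eventually_mul_add_one_pow_mul_pow_le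
    (sub_nonneg.2 hgap1) (sub_lt_self 1 hgap0) ((1 - δ) ^ 2)⁻¹ 2
  obtain ⟨N, hN⟩ := eventually_atTop.1 hdecay
  refine ⟨h, hh0, hh1, N, fun n hn ℓ hℓ => ?_⟩
  obtain ⟨k, rfl⟩ := Nat.exists_eq_add_of_le' hℓ
  set B := hammingBall (Fin n) G ⌊δ * (n : ℝ)⌋₊
  have hpairs (w : Fin n → G) :
      #{p ∈ B ×ˢ B | p.1 + p.2 + w ∈ B} ≤ (2 : ℝ) ^ (-(h * (n : ℝ))) * (#B : ℝ) ^ 2 := by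
    have := card_pairs_add_mem_hammingBall_le hδ0.le (sub_pos.1 hδ) hy0 hy1.le hy
      (congrArg (fun m : ℕ => ⌊δ * m⌋₊) (Fintype.card_fin n).symm) w
    rw [Fintype.card_fin] at this
    refine this.trans ?_
    gcongr
    exact hN n hn
  calc _ = (#{v ∈ Fintype.piFinset fun _ : Fin (k + 2) => B | ∑ i, v i ∈ B} : ℝ) := by
        congr 2
        ext v
        simp
    _ ≤ _ := card_tuples_sum_mem_le B hpairs k
    _ = _ := by ring

end SumEscape

/-- For a prime power `q` (realized as the cardinality of a finite field `F`)
and a constant `δ ∈ (0, 1 - 1/q²)`, there is a constant `h_δ ∈ (0,1)` such that for all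
sufficiently large `n` and every `ℓ` with `2 ≤ ℓ ≤ n`, the probability that the sum of `ℓ`
independent uniformly random vectors of the symplectic ball `B_q^S(2n, ⌊δn⌋)` again lies in the
ball is at most `2^(-h_δ n)`.  (The probability is expressed by counting: the number of
`ℓ`-tuples of ball elements whose sum lies in the ball is at most `2^(-h_δ n)` times the total
number of `ℓ`-tuples of ball elements.) -/
theorem sympBall_sum_escape
    (q : ℕ) (F : Type) [Field F] [Fintype F] [DecidableEq F] (hF : Fintype.card F = q)
    (δ : ℝ) (hδ0 : 0 < δ) (hδ1 : δ < 1 - 1 / (q : ℝ) ^ 2) :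
    ∃ h : ℝ, 0 < h ∧ h < 1 ∧ ∃ N : ℕ, ∀ n : ℕ, N ≤ n → ∀ ℓ : ℕ, 2 ≤ ℓ → ℓ ≤ n →
      (((Finset.univ : Finset (Fin ℓ → Fin n → F × F)).filter fun v =>
          (∀ i, v i ∈ sympBall F n ⌊δ * (n : ℝ)⌋₊) ∧
            (∑ i, v i) ∈ sympBall F n ⌊δ * (n : ℝ)⌋₊).card : ℝ) ≤
        (2 : ℝ) ^ (-(h * (n : ℝ))) * ((sympBall F n ⌊δ * (n : ℝ)⌋₊).card : ℝ) ^ ℓ := by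
  have hq : 1 / (q : ℝ) ^ 2 = 1 / Fintype.card (F × F) := by simp [Fintype.card_prod, hF, sq]
  obtain ⟨h, hh0, hh1, N, hN⟩ := sympBall_sum_escape_general (F × F) δ hδ0 (hq ▸ hδ1)
  exact ⟨h, hh0, hh1, N, fun n hn ℓ hℓ _ => hN n hn ℓ hℓ⟩
end
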